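/- Suppose Λ is a finite simple graph whose maximum vertex degree equals 3, and there exists a vertex u of degree 3 in Λ such that two neighbors of u are adjacent to each other (i.e., the link of u contains an edge). Then there exists a finite simple graph Γ such that there is an injective group homomorphism from G(Λ) into G(Γ), but Λ does not embed into Γ as a full (induced) subgraph. -/

import Mathlib

open SimpleGraph

/-- The set of commutator relations of a graph: one commutator for each edge. -/
def raagRels {V : Type} (G : SimpleGraph V) : Set (FreeGroup V) :=
  {r | ∃ u v : V, G.Adj u v ∧
    r = FreeGroup.of u * FreeGroup.of v * (FreeGroup.of u)⁻¹ * (FreeGroup.of v)⁻¹}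

/-- The right-angled Artin group `A(G)` of a graph `G`. -/
abbrev RAAG {V : Type} (G : SimpleGraph V) : Type := PresentedGroup (raagRels G)

/-- `G(Γ) = A(Γᶜ)`, the RAAG on the complement graph. -/
abbrev GG {V : Type} (G : SimpleGraph V) : Type := RAAG Gᶜ

/-- A linear forest: an acyclic graph all of whose vertices have degree at most 2. -/
def IsLinearForest {V : Type} (G : SimpleGraph V) : Prop :=
  G.IsAcyclic ∧ ∀ v : V, (G.neighborSet v).ncard ≤ 2

/-- The star of a vertex: the vertex together with its neighbours. -/
def starSet {V : Type} (G : SimpleGraph V) (v : V) : Set V :=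
  insert v (G.neighborSet v)

/-- The double `D_v(G)` of `G` along the star of `v`: original vertices together with
copies of the vertices outside the star. -/
def GraphDouble {V : Type} (G : SimpleGraph V) (v : V) :
    SimpleGraph (V ⊕ {w : V // w ∉ starSet G v}) :=
  SimpleGraph.fromRel (fun x y =>
    match x, y with
    | Sum.inl a, Sum.inl b => G.Adj a b
    | Sum.inr a, Sum.inr b => G.Adj a.1 b.1
    | Sum.inl a, Sum.inr b => a ∈ starSet G v ∧ G.Adj a b.1
    | Sum.inr _, Sum.inl _ => False)

/-- Subdivision of the edge `[v,w]` of `Λ`, with `none` as the new vertex. -/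
def SubdivEdge {V : Type} (Λ : SimpleGraph V) (v w : V) : SimpleGraph (Option V) :=
  SimpleGraph.fromRel (fun x y =>
    match x, y with
    | some a, some b => Λ.Adj a b ∧ ¬((a = v ∧ b = w) ∨ (a = w ∧ b = v))
    | some a, none => a = v ∨ a = w
    | none, some _ => False
    | none, none => False)

/-- The graph `Λ_u⁻(w₁,w₂)`, with `none` as the new vertex `v`. -/
def MinusGraph {V : Type} (Λ : SimpleGraph V) (u w₁ w₂ : V) : SimpleGraph (Option V) :=
  SimpleGraph.fromRel (fun x y =>
    match x, y with
    | some a, some b => Λ.Adj a b ∧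
        ¬((a = u ∧ b = w₁) ∨ (a = w₁ ∧ b = u) ∨ (a = u ∧ b = w₂) ∨ (a = w₂ ∧ b = u))
    | some a, none => a = w₁ ∨ a = u ∨ a = w₂
    | none, some _ => False
    | none, none => False)

/-- The graph `Λ_u⁺(w₁,w₂)`: `Λ_u⁻(w₁,w₂)` with the edge `[u,w₂]` added back. -/
def PlusGraph {V : Type} (Λ : SimpleGraph V) (u w₁ w₂ : V) : SimpleGraph (Option V) :=
  SimpleGraph.fromRel (fun x y =>
    (MinusGraph Λ u w₁ w₂).Adj x y ∨ (x = some u ∧ y = some w₂))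

/-!
`G(Γ)` acts on the integer-valued functions on walks of `Γ`: a vertex `a` acts as `1 + N a`, where
`N a` prepends `a` to a walk. Since `N a * N b = 0` whenever `a` and `b` are equal or non-adjacent,
the defining relations hold. Let `coeff g t` be the coefficient of the walk `t` in the image of the
empty walk under `g`. If `a ^ n * h` is spelled by a word with the fewest possible syllables and `t`
is a longest walk with `coeff h t ≠ 0` to which `a` can be prepended, then
`coeff (a ^ n * h) (a :: t) = n * coeff h t ≠ 0`. Thus the coefficients detect every nontrivial
element.

For a homomorphism `p : Γ →g Λ` with finite fibers, which are automatically independent sets,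
sending each vertex of `Λ` to the product of its fiber defines `G(Λ) →* G(Γ)`. On walks of `Γ` the
coefficients of the image of `g` are those of `g` at the projected walks, so this homomorphism is
injective as soon as walks lift along `p`. They do lift to the bipartite double cover of `Λ`, which,
being bipartite, contains no triangle.
-/

namespace RAAG

section OneAddSqZero

variable {R : Type*} [Ring R]

/-- The unit `1 + N` attached to an element `N` of square zero; its inverse is `1 - N`. -/
def oneAddUnit (N : R) (hN : N * N = 0) : Rˣ where
  val := 1 + N
  inv := 1 - N
  val_inv := by simp [one_add_mul, mul_sub, hN]
  inv_val := by simp [sub_mul, mul_one_add, hN]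

lemma val_oneAddUnit_zpow (N : R) (hN : N * N = 0) (n : ℤ) :
    ((oneAddUnit N hN ^ n : Rˣ) : R) = 1 + n • N := by
  induction n with
  | zero => simp
  | succ n ih =>
    rw [zpow_add_one, Units.val_mul, ih]
    simp only [oneAddUnit, mul_one_add, one_add_mul, smul_mul_assoc, hN]
    module
  | pred n ih =>
    rw [zpow_sub_one, Units.val_mul, ih]
    simp only [oneAddUnit, Units.inv_mk, mul_sub, mul_one, one_add_mul, smul_mul_assoc, hN]
    module

lemma commute_oneAddUnit {M N : R} (hM : M * M = 0) (hN : N * N = 0) (h : Commute M N) :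
    Commute (oneAddUnit M hM) (oneAddUnit N hN) :=
  Units.ext ((Commute.one_right _).add_right ((Commute.one_left _).add_left h)).eq

end OneAddSqZero

section Presentation

variable {V : Type} {G : SimpleGraph V}

lemma commute_of {u v : V} (h : G.Adj u v) :
    Commute (PresentedGroup.of u : RAAG G) (PresentedGroup.of v) := by
  have hrel := PresentedGroup.one_of_mem (rels := raagRels G) ⟨u, v, h, rfl⟩
  rwa [← commutatorElement_def, map_commutatorElement,
    commutatorElement_eq_one_iff_commute] at hrel

/-- The universal property of `A(G)`: a map on the vertices sending adjacent vertices to commuting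
elements extends to a homomorphism. -/
def lift {H : Type*} [Group H] (f : V → H) (hf : ∀ u v, G.Adj u v → Commute (f u) (f v)) :
    RAAG G →* H :=
  PresentedGroup.toGroup (f := f) <| by
    rintro _ ⟨u, v, huv, rfl⟩
    simpa [← commutatorElement_def, commutatorElement_eq_one_iff_commute] using hf u v huv

@[simp]
lemma lift_of {H : Type*} [Group H] (f : V → H)
    (hf : ∀ u v, G.Adj u v → Commute (f u) (f v)) (v : V) :
    lift f hf (PresentedGroup.of v) = f v :=
  PresentedGroup.toGroup.of _

lemma syllable_induction {motive : RAAG G → Prop} (one : motive 1)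
    (zpow_mul : ∀ (a : V) (n : ℤ) (g : RAAG G), motive g → motive (PresentedGroup.of a ^ n * g))
    (g : RAAG G) : motive g := by
  have hg : g ∈ Subgroup.closure (Set.range (PresentedGroup.of (rels := raagRels G))) := by
    simp [PresentedGroup.closure_range_of]
  induction hg using Subgroup.closure_induction_left with
  | one => exact one
  | mul_left x hx y _ ih =>
    obtain ⟨a, rfl⟩ := hx
    simpa using zpow_mul a 1 y ih
  | inv_mul_cancel x hx y _ ih =>
    obtain ⟨a, rfl⟩ := hx
    simpa using zpow_mul a (-1) y ih

end Presentation

section IndepProd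

variable {V : Type} {Γ : SimpleGraph V}

/-- The product in `G(Γ)` of a finite set of pairwise non-adjacent vertices. -/
noncomputable def indepProd (S : Finset V) (hS : Γ.IsIndepSet S) : GG Γ :=
  S.noncommProd PresentedGroup.of fun _ ha _ hb hab =>
    commute_of ((compl_adj _ _ _).2 ⟨hab, hS ha hb hab⟩)

@[simp]
lemma indepProd_empty (h : Γ.IsIndepSet (∅ : Finset V)) : indepProd ∅ h = 1 :=
  Finset.noncommProd_empty _ _

lemma indepProd_singleton (a : V) (h : Γ.IsIndepSet ({a} : Finset V)) :
    indepProd {a} h = PresentedGroup.of a :=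
  Finset.noncommProd_singleton _ _

lemma indepProd_insert [DecidableEq V] {a : V} {S : Finset V} (ha : a ∉ S)
    (h : Γ.IsIndepSet (insert a S : Finset V)) :
    indepProd (insert a S) h =
      PresentedGroup.of a * indepProd S (h.mono (by simp)) :=
  Finset.noncommProd_insert_of_notMem _ _ _ _ ha

lemma commute_indepProd {S T : Finset V} (hS : Γ.IsIndepSet S) (hT : Γ.IsIndepSet T)
    (h : ∀ x ∈ S, ∀ y ∈ T, x ≠ y ∧ ¬ Γ.Adj x y) : Commute (indepProd S hS) (indepProd T hT) :=
  Finset.noncommProd_commute _ _ _ _ fun y hy =>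
    (Finset.noncommProd_commute _ _ _ _ fun x hx =>
      (commute_of ((compl_adj _ _ _).2 (h x hx y hy))).symm).symm

end IndepProd

section SyllableWord

variable {V : Type} {G : SimpleGraph V}

/-- The element `a₁ ^ n₁ * a₂ ^ n₂ * ⋯` of `A(G)` spelled by a list of syllables `(aᵢ, nᵢ)`. -/
def wordEval (G : SimpleGraph V) (l : List (V × ℤ)) : RAAG G :=
  (l.map fun s => PresentedGroup.of s.1 ^ s.2).prod

@[simp]
lemma wordEval_nil : wordEval G [] = 1 := rfl

@[simp]
lemma wordEval_cons (a : V) (n : ℤ) (l : List (V × ℤ)) :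
    wordEval G ((a, n) :: l) = PresentedGroup.of a ^ n * wordEval G l := by
  simp [wordEval]

lemma wordEval_surjective : Function.Surjective (wordEval G) :=
  syllable_induction ⟨[], rfl⟩ fun a n _ ⟨l, hl⟩ => ⟨(a, n) :: l, by simp [hl]⟩

/-- A word is reduced if no word with fewer syllables spells the same element. -/
def IsReduced (G : SimpleGraph V) (l : List (V × ℤ)) : Prop :=
  ∀ l', wordEval G l' = wordEval G l → l.length ≤ l'.length

lemma exists_isReduced (g : RAAG G) : ∃ l, IsReduced G l ∧ wordEval G l = g := by
  obtain ⟨l, hl⟩ := exists_minimalFor_of_wellFoundedLT (fun l => wordEval G l = g) List.length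
    (wordEval_surjective g)
  refine ⟨l, fun l' hl' => ?_, hl.prop⟩
  exact (le_total _ _).elim id (hl.le_of_le (hl'.trans hl.prop))

lemma IsReduced.tail {a : V} {n : ℤ} {l : List (V × ℤ)} (h : IsReduced G ((a, n) :: l)) :
    IsReduced G l := fun l' hl' => by
  simpa using h ((a, n) :: l') (by simp [hl'])

lemma IsReduced.exponent_ne_zero {a : V} {n : ℤ} {l : List (V × ℤ)}
    (h : IsReduced G ((a, n) :: l)) : n ≠ 0 := by
  rintro rfl
  simpa using h l (by simp)

lemma IsReduced.ne {a b : V} {m n : ℤ} {l : List (V × ℤ)}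
    (h : IsReduced G ((a, m) :: (b, n) :: l)) : a ≠ b := by
  rintro rfl
  simpa using h ((a, m + n) :: l) (by simp [zpow_add, mul_assoc])

lemma IsReduced.swap {a b : V} {m n : ℤ} {l : List (V × ℤ)}
    (h : IsReduced G ((a, m) :: (b, n) :: l)) (hab : G.Adj a b) :
    IsReduced G ((b, n) :: (a, m) :: l) := fun l' hl' => by
  have hcomm := ((commute_of hab).zpow_zpow m n).eq
  simpa using h l' (by simpa [← mul_assoc, hcomm] using hl')

end SyllableWord

section Prepend

variable {V : Type*} (Γ : SimpleGraph V)

open Classical in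
/-- Prepending a vertex of `S` to a walk, as an operator on integer-valued functions on lists of
vertices. The coefficient functions of interest live on walks, that is, on the lists that are chains
for adjacency. -/
noncomputable def prepend (S : Set V) : Module.End ℤ (List V → ℤ) where
  toFun f
    | [] => 0
    | b :: t => if b ∈ S ∧ (b :: t).IsChain Γ.Adj then f t else 0
  map_add' f g := by
    ext (_ | ⟨b, t⟩)
    · simp
    · simp only [Pi.add_apply]; split_ifs <;> simp
  map_smul' n f := by
    ext (_ | ⟨b, t⟩) <;> simp

variable {Γ}

@[simp]
lemma prepend_apply_nil (S : Set V) (f : List V → ℤ) : prepend Γ S f [] = 0 := rfl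

lemma prepend_apply_cons_of_mem {S : Set V} {b : V} {t : List V} (hb : b ∈ S)
    (ht : (b :: t).IsChain Γ.Adj) (f : List V → ℤ) : prepend Γ S f (b :: t) = f t :=
  if_pos ⟨hb, ht⟩

lemma prepend_apply_cons_of_notMem {S : Set V} {b : V} (hb : b ∉ S) (t : List V)
    (f : List V → ℤ) : prepend Γ S f (b :: t) = 0 :=
  if_neg fun h => hb h.1

open Classical in
lemma prepend_apply_cons (S : Set V) (f : List V → ℤ) (b : V) (t : List V) :
    prepend Γ S f (b :: t) = if b ∈ S ∧ (b :: t).IsChain Γ.Adj then f t else 0 := rfl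

@[simp]
lemma prepend_empty : prepend Γ ∅ = 0 := by
  ext f (_ | ⟨b, t⟩) <;> simp [prepend_apply_cons]

lemma prepend_mul_prepend_eq_zero {S T : Set V} (h : ∀ a ∈ S, ∀ b ∈ T, ¬ Γ.Adj a b) :
    prepend Γ S * prepend Γ T = 0 := by
  ext f (_ | ⟨a, _ | ⟨b, t⟩⟩)
  · simp
  · simp [prepend_apply_cons]
  · simp only [Module.End.mul_apply, prepend_apply_cons, LinearMap.zero_apply,
      Pi.zero_apply, List.isChain_cons_cons]
    grind

lemma prepend_insert {a : V} {S : Set V} (ha : a ∉ S) :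
    prepend Γ (insert a S) = prepend Γ {a} + prepend Γ S := by
  ext f (_ | ⟨b, t⟩)
  · simp
  · simp only [LinearMap.add_apply, Pi.add_apply, prepend_apply_cons, Set.mem_insert_iff,
      Set.mem_singleton_iff]
    grind

lemma prepend_mul_self {S : Set V} (hS : Γ.IsIndepSet S) : prepend Γ S * prepend Γ S = 0 :=
  prepend_mul_prepend_eq_zero fun _ ha _ hb hab => hS ha hb hab.ne hab

end Prepend

section WalkRepresentation

variable {V : Type} {Γ : SimpleGraph V}

variable (Γ) in
/-- The representation of `G(Γ)` in which a vertex `a` acts as `1 + N`, where `N` prepends `a` to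
walks. -/
noncomputable def walkRep : GG Γ →* (Module.End ℤ (List V → ℤ))ˣ :=
  lift (fun a => oneAddUnit (prepend Γ {a}) (prepend_mul_self (Set.pairwise_singleton _ _)))
    fun a b hab => by
      have hΓ : ¬ Γ.Adj a b := ((compl_adj _ _ _).1 hab).2
      refine commute_oneAddUnit _ _ ?_
      rw [commute_iff_eq, prepend_mul_prepend_eq_zero (by simpa using hΓ),
        prepend_mul_prepend_eq_zero (by simpa [Γ.adj_comm] using hΓ)]

lemma walkRep_indepProd (S : Finset V) (hS : Γ.IsIndepSet S) :
    walkRep Γ (indepProd S hS) = oneAddUnit (prepend Γ S) (prepend_mul_self hS) := by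
  classical
  induction S using Finset.induction_on with
  | empty =>
    ext1
    simp [oneAddUnit]
  | insert a S ha ih =>
    have hS' : Γ.IsIndepSet S := hS.mono (by simp)
    have hmul : prepend Γ {a} * prepend Γ S = 0 := by
      refine prepend_mul_prepend_eq_zero ?_
      rintro _ rfl b hb hab
      exact hS (by simp) (by simp [Finset.mem_coe.1 hb]) hab.ne hab
    rw [indepProd_insert ha, map_mul, ih hS']
    ext1
    simp only [walkRep, lift_of, Units.val_mul, oneAddUnit, one_add_mul, mul_one_add, hmul,
      Finset.coe_insert, prepend_insert (Finset.mem_coe.not.2 ha)]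
    abel

open Classical in
/-- The coefficient at the list `t` of the vector obtained by letting `g` act on the empty walk. -/
noncomputable def coeff (g : GG Γ) (t : List V) : ℤ :=
  (walkRep Γ g : Module.End ℤ (List V → ℤ)) (Pi.single [] 1) t

@[simp]
lemma coeff_one_cons (b : V) (t : List V) : coeff (1 : GG Γ) (b :: t) = 0 := by simp [coeff]

lemma coeff_indepProd_zpow_mul (S : Finset V) (hS : Γ.IsIndepSet S) (n : ℤ) (g : GG Γ) :
    coeff (indepProd S hS ^ n * g) = coeff g + n • prepend Γ S (coeff g) := by
  ext t
  simp only [coeff, map_mul, map_zpow, walkRep_indepProd, Units.val_mul, val_oneAddUnit_zpow]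
  rfl

lemma coeff_of_zpow_mul (a : V) (n : ℤ) (g : GG Γ) :
    coeff (PresentedGroup.of a ^ n * g) = coeff g + n • prepend Γ {a} (coeff g) := by
  simpa [indepProd_singleton] using coeff_indepProd_zpow_mul {a} (by simp) n g

@[simp]
lemma coeff_nil (g : GG Γ) : coeff g [] = 1 := by
  induction g using syllable_induction with
  | one => simp [coeff]
  | zpow_mul a n g ih => simp [coeff_of_zpow_mul, ih]

lemma coeff_of_zpow_mul_cons_of_ne {a b : V} (hab : a ≠ b) (n : ℤ) (g : GG Γ) (t : List V) :
    coeff (PresentedGroup.of a ^ n * g) (b :: t) = coeff g (b :: t) := by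
  simp [coeff_of_zpow_mul, prepend_apply_cons_of_notMem, hab.symm]

lemma coeff_of_zpow_mul_cons_self {a : V} {t : List V} (h : (a :: t).IsChain Γ.Adj) (n : ℤ)
    (g : GG Γ) :
    coeff (PresentedGroup.of a ^ n * g) (a :: t) = coeff g (a :: t) + n * coeff g t := by
  simp [coeff_of_zpow_mul, prepend_apply_cons_of_mem, h]

lemma exists_length_le_of_coeff_ne_zero (g : GG Γ) :
    ∃ n, ∀ t, coeff g t ≠ 0 → t.length ≤ n := by
  induction g using syllable_induction with
  | one => exact ⟨0, fun | [], _ => le_rfl | b :: t, h => absurd (coeff_one_cons b t) h⟩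
  | zpow_mul a m g ih =>
    obtain ⟨n, hn⟩ := ih
    refine ⟨n + 1, fun | [], _ => Nat.zero_le _ | b :: t, h => ?_⟩
    by_contra! hlt
    have hcons : coeff g (b :: t) = 0 := not_not.1 fun h0 => by grind [hn _ h0]
    have htail : coeff g t = 0 := not_not.1 fun h0 => by grind [hn _ h0]
    simp [coeff_of_zpow_mul, prepend_apply_cons, hcons, htail] at h

/-- `t` is a longest list with nonzero coefficient in `g` such that `a :: t` is a walk. -/
def IsLongestTail (g : GG Γ) (a : V) (t : List V) : Prop :=
  MaximalFor (fun t => (a :: t).IsChain Γ.Adj ∧ coeff g t ≠ 0) List.length t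

lemma exists_isLongestTail (g : GG Γ) (a : V) : ∃ t, IsLongestTail g a t := by
  obtain ⟨n, hn⟩ := exists_length_le_of_coeff_ne_zero g
  refine Set.Finite.exists_maximalFor' List.length
    {t | (a :: t).IsChain Γ.Adj ∧ coeff g t ≠ 0} ?_ ⟨[], by simp⟩
  exact (Set.finite_Iic n).subset (Set.image_subset_iff.2 fun t ht => hn t ht.2)

lemma IsLongestTail.length_le {g : GG Γ} {a : V} {s t : List V} (ht : IsLongestTail g a t)
    (hchain : (a :: s).IsChain Γ.Adj) (hs : coeff g s ≠ 0) : s.length ≤ t.length :=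
  (le_total _ _).elim id (ht.le_of_le ⟨hchain, hs⟩)

lemma IsLongestTail.of_zpow_mul {a b : V} {n : ℤ} {g : GG Γ} {t : List V} (hab : ¬ Γ.Adj a b)
    (ht : IsLongestTail (PresentedGroup.of b ^ n * g) a t) : IsLongestTail g a t := by
  have hcoeff (s : List V) (hs : (a :: s).IsChain Γ.Adj) :
      coeff (PresentedGroup.of b ^ n * g) s = coeff g s := by
    cases s with
    | nil => simp
    | cons c s =>
      refine coeff_of_zpow_mul_cons_of_ne ?_ n g s
      rintro rfl
      exact hab (List.isChain_cons_cons.1 hs).1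
  refine ⟨⟨ht.prop.1, hcoeff t ht.prop.1 ▸ ht.prop.2⟩, fun s hs _ => ?_⟩
  exact ht.length_le hs.1 (by rw [hcoeff s hs.1]; exact hs.2)

lemma IsLongestTail.coeff_cons_eq_zero {a : V} {n : ℤ} {l : List (V × ℤ)}
    (hl : IsReduced Γᶜ ((a, n) :: l)) {t : List V} (ht : IsLongestTail (wordEval Γᶜ l) a t) :
    coeff (wordEval Γᶜ l) (a :: t) = 0 := by
  induction l generalizing a n t with
  | nil => simp
  | cons s l ih =>
    obtain ⟨b, k⟩ := s
    have hne : a ≠ b := hl.ne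
    rw [wordEval_cons] at ht ⊢
    rw [coeff_of_zpow_mul_cons_of_ne hne.symm]
    by_cases hab : Γ.Adj a b
    -- If `a :: t` had nonzero coefficient, maximality of a longest tail `s` for `b` would give
    -- `|a :: t| ≤ |s|`, whereas maximality of `t` gives `|b :: s| ≤ |t|`.
    · by_contra hat
      obtain ⟨s, hs⟩ := exists_isLongestTail (wordEval Γᶜ l) b
      have hbs : (b :: s).IsChain Γ.Adj := hs.prop.1
      have hcoeff : coeff (PresentedGroup.of b ^ k * wordEval Γᶜ l) (b :: s) ≠ 0 := by
        rw [coeff_of_zpow_mul_cons_self hbs, ih hl.tail hs, zero_add]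
        exact mul_ne_zero hl.tail.exponent_ne_zero hs.prop.2
      have hlong : (b :: s).length ≤ t.length :=
        ht.length_le (List.isChain_cons_cons.2 ⟨hab, hbs⟩) hcoeff
      have hshort : (a :: t).length ≤ s.length :=
        hs.length_le (List.isChain_cons_cons.2 ⟨hab.symm, ht.prop.1⟩) hat
      simp only [List.length_cons] at hlong hshort
      lia
    · exact ih (hl.swap ((compl_adj _ _ _).2 ⟨hne, hab⟩)).tail (ht.of_zpow_mul hab)

theorem exists_coeff_cons_ne_zero {g : GG Γ} (hg : g ≠ 1) :
    ∃ a t, (a :: t).IsChain Γ.Adj ∧ coeff g (a :: t) ≠ 0 := by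
  obtain ⟨_ | ⟨⟨a, n⟩, l⟩, hl, rfl⟩ := exists_isReduced g
  · simp at hg
  obtain ⟨t, ht⟩ := exists_isLongestTail (wordEval Γᶜ l) a
  refine ⟨a, t, ht.prop.1, ?_⟩
  rw [wordEval_cons, coeff_of_zpow_mul_cons_self ht.prop.1, ht.coeff_cons_eq_zero hl, zero_add]
  exact mul_ne_zero hl.exponent_ne_zero ht.prop.2

end WalkRepresentation

section Transfer

lemma isIndepSet_preimage_singleton {V W : Type*} {Γ : SimpleGraph W} {Λ : SimpleGraph V}
    (p : Γ →g Λ) (v : V) : Γ.IsIndepSet (p ⁻¹' {v}) := by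
  intro x hx y hy _ hxy
  have hadj := p.map_adj hxy
  rw [hx, hy] at hadj
  exact Λ.irrefl hadj

variable {V W : Type} {Γ : SimpleGraph W} {Λ : SimpleGraph V} (p : Γ →g Λ)
  (hfin : ∀ v, (p ⁻¹' {v}).Finite)

/-- The homomorphism `G(Λ) →* G(Γ)` induced by a graph homomorphism `p : Γ →g Λ` with finite fibers:
it sends a vertex to the product of the vertices above it. -/
noncomputable def transfer : GG Λ →* GG Γ :=
  lift (fun v => indepProd (hfin v).toFinset (by simpa using isIndepSet_preimage_singleton p v))
    fun u v huv => by
      obtain ⟨hne, hadj⟩ := (compl_adj _ _ _).1 huv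
      refine commute_indepProd _ _ fun x hx y hy => ?_
      obtain rfl : p x = u := by simpa using hx
      obtain rfl : p y = v := by simpa using hy
      exact ⟨fun hxy => hne (congrArg p hxy), fun hxy => hadj (p.map_adj hxy)⟩

lemma transfer_of (v : V) :
    transfer p hfin (PresentedGroup.of v) =
      indepProd (hfin v).toFinset (by simpa using isIndepSet_preimage_singleton p v) :=
  lift_of _ _ v

lemma coeff_transfer (g : GG Λ) {s : List W} (hs : s.IsChain Γ.Adj) :
    coeff (transfer p hfin g) s = coeff g (s.map p) := by
  induction g using syllable_induction generalizing s with
  | one => cases s <;> simp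
  | zpow_mul v n g ih =>
    cases s with
    | nil => simp
    | cons x s =>
      have hmap : (p x :: s.map p).IsChain Λ.Adj :=
        List.isChain_map_of_isChain p (fun _ _ => p.map_adj) hs
      have htail : s.IsChain Γ.Adj := hs.tail
      rw [map_mul, map_zpow, transfer_of, coeff_indepProd_zpow_mul, coeff_of_zpow_mul]
      simp only [Pi.add_apply, Pi.smul_apply, ih hs, List.map_cons]
      by_cases hx : p x = v
      · rw [prepend_apply_cons_of_mem (by simpa using hx) hs,
          prepend_apply_cons_of_mem (by simpa using hx) hmap, ih htail]
      · rw [prepend_apply_cons_of_notMem (by simpa using hx),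
          prepend_apply_cons_of_notMem (by simpa using hx)]

theorem transfer_injective
    (hlift : ∀ t : List V, t.IsChain Λ.Adj → ∃ s : List W, s.IsChain Γ.Adj ∧ s.map p = t) :
    Function.Injective (transfer p hfin) := by
  rw [injective_iff_map_eq_one]
  intro g hg
  by_contra hne
  obtain ⟨a, t, hchain, hcoeff⟩ := exists_coeff_cons_ne_zero hne
  obtain ⟨s, hs, hst⟩ := hlift _ hchain
  rw [← hst, ← coeff_transfer p hfin g hs, hg] at hcoeff
  cases s <;> simp_all

end Transfer

section BipartiteDoubleCover

variable {V : Type*} (Λ : SimpleGraph V)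

/-- The covering map from the bipartite double cover, forgetting the side of a vertex. -/
def doubleCoverProj : Λ.bipartiteDoubleCover →g Λ where
  toFun := Sum.elim id id
  map_rel' {x y} h := by cases x <;> cases y <;> simp_all

lemma finite_doubleCoverProj_fiber (v : V) : (doubleCoverProj Λ ⁻¹' {v}).Finite := by
  refine (Set.toFinite {Sum.inl v, Sum.inr v}).subset ?_
  rintro (x | x) (rfl : x = v) <;> simp

lemma exists_isChain_map_doubleCoverProj {t : List V} (ht : t.IsChain Λ.Adj) :
    ∃ s : List (V ⊕ V), s.IsChain Λ.bipartiteDoubleCover.Adj ∧ s.map (doubleCoverProj Λ) = t := by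
  induction t with
  | nil => exact ⟨[], by simp⟩
  | cons a t ih =>
    obtain ⟨s, hs, rfl⟩ := ih ht.tail
    rcases s with _ | ⟨x | x, s⟩
    · exact ⟨[Sum.inl a], .singleton _, rfl⟩
    · exact ⟨Sum.inr a :: Sum.inl x :: s, hs.cons_cons (List.isChain_cons_cons.1 ht).1, rfl⟩
    · exact ⟨Sum.inl a :: Sum.inr x :: s, hs.cons_cons (List.isChain_cons_cons.1 ht).1, rfl⟩

end BipartiteDoubleCover

end RAAG

theorem statement18_general {V : Type} (Λ : SimpleGraph V) (hΛ : ¬ Λ.IsBipartite) :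
    (∃ φ : GG Λ →* GG Λ.bipartiteDoubleCover, Function.Injective φ) ∧
      ¬ Nonempty (Λ ↪g Λ.bipartiteDoubleCover) :=
  ⟨⟨_, RAAG.transfer_injective _ (RAAG.finite_doubleCoverProj_fiber Λ)
      fun _ => RAAG.exists_isChain_map_doubleCoverProj Λ⟩,
    fun ⟨f⟩ => hΛ (isBipartite_bipartiteDoubleCover.of_hom f.toHom)⟩

/-- If `Λ` has maximum degree exactly 3 and some degree-3 vertex `u` has two adjacent
neighbours, then there is a finite graph `Γ` with `G(Λ) ↪ G(Γ)` but `Λ` not an induced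
subgraph of `Γ`. -/
theorem statement18 {V : Type} [Fintype V] (Λ : SimpleGraph V)
    (hmax : ∀ v : V, (Λ.neighborSet v).ncard ≤ 3)
    (hu : ∃ u : V, (Λ.neighborSet u).ncard = 3 ∧
      ∃ a b : V, Λ.Adj u a ∧ Λ.Adj u b ∧ Λ.Adj a b) :
    ∃ (W : Type) (_ : Fintype W) (Γ : SimpleGraph W),
      (∃ φ : GG Λ →* GG Γ, Function.Injective φ) ∧ ¬ Nonempty (Λ ↪g Γ) := by
  obtain ⟨u, -, a, b, hua, hub, hab⟩ := hu
  have hΛ : ¬ Λ.IsBipartite := by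
    classical
    exact fun h => h.cliqueFree (by norm_num) _ (is3Clique_triple_iff.2 ⟨hua, hub, hab⟩)
  exact ⟨V ⊕ V, inferInstance, Λ.bipartiteDoubleCover, statement18_general Λ hΛ⟩
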